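/- Let ν > 0, L > 0, ξ > 0, λ ∈ ℝ, δ ∈ (0,1), and let q : [0,L] → ℝ be continuous. Assume there is x_δ ∈ (0,L) with q(x)² ≤ δ for all x ∈ [0,x_δ] and q(x)² > δ for all x ∈ (x_δ,L], and let x_δ < a < b ≤ L. Let u ∈ C²((0,L)) ∩ C⁰([0,L]) with u(0) = u(L) = 0 satisfy −u''(x) + ξ² q(x)² u(x) + ((ν² − 1/4)/x²) u(x) = λ u(x) on (0,L), with ∫₀^L u(x)² dx = 1 and λ ≤ δ ξ². Let ψ ∈ C²([0,L]) be nondecreasing with ψ = 0 on [0,x_δ] and ψ'(x)² ≤ (1−δ)² · max(q(x)² − δ, 0) for every x ∈ [0,L], and set θ := u e^{ξψ}. Assume θ' and x ↦ θ(x)/x are square-integrable on (0,L), θ(x)θ'(x) → 0 as x → 0⁺ and as x → L⁻, and ∫₀^L θ'(x)² dx ≥ (1/4) ∫₀^L θ(x)²/x² dx (which holds automatically by the one-dimensional Hardy inequality since θ vanishes at 0). Then ∫_a^b u(x)² dx ≤ ( sup_{x∈[0,x_δ]} |q(x)² − δ| / ( (2δ − δ²) · min_{x∈[a,b]} (q(x)²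 − δ) ) ) · e^{−2ξψ(a)}. -/

import Mathlib

open MeasureTheory Real Set Filter

/-- The Agmon-conjugated function `θ = u e^{ξψ}`. -/
noncomputable def agmonTheta (ξ : ℝ) (u ψ : ℝ → ℝ) : ℝ → ℝ :=
  fun x => u x * Real.exp (ξ * ψ x)

/-!
If `-u'' + P u = λ u` and `θ = u e^{ξψ}`, then
`(u u' e^{2ξψ})' = θ'² + (P - λ - ξ²ψ'²) θ²`.
Since `u²` is minimal at both endpoints, where it vanishes, the flux `u u' = (u²)' / 2` takes
nonnegative values arbitrarily close to the left endpoint and nonpositive values arbitrarily close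
to the right one, so the right-hand side has integral at most `0`. For `P = ξ²V + c/x²` with
`c ≥ -1/4`, Hardy's inequality absorbs the singular term into `∫ θ'²`, which leaves
`∫ (V - E - ψ'²) θ² ≤ 0` as soon as `λ ≤ E ξ²`. Where `V ≤ E` the weight is trivial and the
integrand is at least `-sup |V - E| u²`; elsewhere it is at least `(1 - κ) (V - E) u² e^{2ξψ}`.
-/

section
open scoped Topology

section BoundaryFlux

variable {f f' : ℝ → ℝ} {α β : ℝ}

theorem frequently_nonneg_deriv_nhdsGT (hαβ : α < β) (hf : ContinuousOn f (Icc α β))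
    (hf' : ∀ x ∈ Ioo α β, HasDerivAt f (f' x) x) (hmin : IsMinOn f (Ioo α β) α) :
    ∃ᶠ x in 𝓝[>] α, 0 ≤ f' x := by
  refine frequently_iff.2 fun {U} hU => ?_
  obtain ⟨c, hc, hcU⟩ := (mem_nhdsGT_iff_exists_mem_Ioc_Ioo_subset hαβ).1 hU
  obtain ⟨d, hαd, hdc⟩ := exists_between hc.1
  have hdβ : d < β := hdc.trans_le hc.2
  obtain ⟨x, hx, hslope⟩ := exists_hasDerivAt_eq_slope f f' hαd
    (hf.mono (Icc_subset_Icc_right hdβ.le)) fun x hx => hf' x ⟨hx.1, hx.2.trans hdβ⟩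
  refine ⟨x, hcU ⟨hx.1, hx.2.trans hdc⟩, ?_⟩
  rw [hslope]
  exact div_nonneg (sub_nonneg.2 (hmin ⟨hαd, hdβ⟩)) (sub_nonneg.2 hαd.le)

theorem frequently_nonpos_deriv_nhdsLT (hαβ : α < β) (hf : ContinuousOn f (Icc α β))
    (hf' : ∀ x ∈ Ioo α β, HasDerivAt f (f' x) x) (hmin : IsMinOn f (Ioo α β) β) :
    ∃ᶠ x in 𝓝[<] β, f' x ≤ 0 := by
  refine frequently_iff.2 fun {U} hU => ?_
  obtain ⟨c, hc, hcU⟩ := (mem_nhdsLT_iff_exists_mem_Ico_Ioo_subset hαβ).1 hU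
  obtain ⟨d, hcd, hdβ⟩ := exists_between hc.2
  have hαd : α < d := hc.1.trans_lt hcd
  obtain ⟨x, hx, hslope⟩ := exists_hasDerivAt_eq_slope f f' hdβ
    (hf.mono (Icc_subset_Icc_left hαd.le)) fun x hx => hf' x ⟨hαd.trans hx.1, hx.2⟩
  refine ⟨x, hcU ⟨hcd.trans hx.1, hx.2⟩, ?_⟩
  rw [hslope]
  exact div_nonpos_of_nonpos_of_nonneg (sub_nonpos.2 (hmin ⟨hαd, hdβ⟩)) (sub_nonneg.2 hdβ.le)

theorem integral_nonpos_of_hasDerivAt_of_frequently (hαβ : α < β)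
    (hf' : ∀ x ∈ Ioo α β, HasDerivAt f (f' x) x) (hint : IntervalIntegrable f' volume α β)
    (hα : ∃ᶠ x in 𝓝[>] α, 0 ≤ f x) (hβ : ∃ᶠ x in 𝓝[<] β, f x ≤ 0) :
    ∫ x in α..β, f' x ≤ 0 := by
  obtain ⟨c, hc⟩ := exists_between hαβ
  have hc' : c ∈ uIcc α β := Icc_subset_uIcc (Ioo_subset_Icc_self hc)
  have ftc : ∀ x ∈ Ioo α β, f c + ∫ t in c..x, f' t = f x := fun x hx => by
    have hsub : uIcc c x ⊆ Ioo α β := ordConnected_Ioo.uIcc_subset hc hx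
    rw [intervalIntegral.integral_eq_sub_of_hasDerivAt (fun t ht => hf' t (hsub ht))
      (hint.mono_set (hsub.trans (Ioo_subset_Icc_self.trans Icc_subset_uIcc)))]
    ring
  have hcont : ContinuousOn (fun x => f c + ∫ t in c..x, f' t) (uIcc α β) :=
    (intervalIntegral.continuousOn_primitive_interval' hint hc').const_add (f c)
  have hIoo : Ioo α β ⊆ uIcc α β := Ioo_subset_Icc_self.trans Icc_subset_uIcc
  have left : 0 ≤ f c + ∫ t in c..α, f' t := by
    have hlim := (hcont α left_mem_uIcc).tendsto.mono_left (nhdsWithin_mono α hIoo)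
    rw [nhdsWithin_Ioo_eq_nhdsGT hαβ] at hlim
    refine ge_of_tendsto_of_frequently hlim (hα.mp ?_)
    filter_upwards [Ioo_mem_nhdsGT hαβ] with x hx hfx using (ftc x hx).symm ▸ hfx
  have right : f c + ∫ t in c..β, f' t ≤ 0 := by
    have hlim := (hcont β right_mem_uIcc).tendsto.mono_left (nhdsWithin_mono β hIoo)
    rw [nhdsWithin_Ioo_eq_nhdsLT hαβ] at hlim
    refine le_of_tendsto_of_frequently hlim (hβ.mp ?_)
    filter_upwards [Ioo_mem_nhdsLT hαβ] with x hx hfx using (ftc x hx).symm ▸ hfx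
  have hsplit := intervalIntegral.integral_interval_sub_left
    (hint.mono_set (uIcc_subset_uIcc hc' right_mem_uIcc))
    (hint.mono_set (uIcc_subset_uIcc hc' left_mem_uIcc))
  linarith

end BoundaryFlux

section Hardy

variable {f f' : ℝ → ℝ} {L : ℝ}

theorem sq_sub_le_mul_integral_sq_deriv {α β : ℝ} (hαβ : α ≤ β) (hf : ContinuousOn f (Icc α β))
    (hf' : ∀ x ∈ Ioo α β, HasDerivAt f (f' x) x)
    (hint : IntervalIntegrable (fun x => f' x ^ 2) volume α β) :
    (f β - f α) ^ 2 ≤ (β - α) * ∫ x in α..β, f' x ^ 2 := by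
  -- The quadratic `t ↦ ∫ (t f' - 1)²` is nonnegative, so its discriminant is nonpositive.
  have hquad : ∀ t : ℝ, 0 ≤ (∫ x in α..β, f' x ^ 2) * (t * t) + (-2 * (f β - f α)) * t
      + (β - α) := fun t => by
    have hφ : IntervalIntegrable (fun x => t ^ 2 * f' x ^ 2 + 1) volume α β :=
      (hint.const_mul _).add intervalIntegrable_const
    have hle := intervalIntegral.sub_le_integral_of_hasDeriv_right_of_le hαβ
      (hf.const_mul (2 * t)) (fun x hx => ((hf' x hx).const_mul (2 * t)).hasDerivWithinAt)
      ((intervalIntegrable_iff_integrableOn_Icc_of_le hαβ).1 hφ)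
      fun x _ => by nlinarith [sq_nonneg (t * f' x - 1)]
    rw [intervalIntegral.integral_add (hint.const_mul _) intervalIntegrable_const,
      intervalIntegral.integral_const_mul, intervalIntegral.integral_const, smul_eq_mul] at hle
    linarith
  have hdiscrim := discrim_le_zero hquad
  rw [discrim] at hdiscrim
  linarith

theorem intervalIntegrable_sq_div_self_of_pos {ε : ℝ} (hε : 0 < ε) (hεL : ε ≤ L)
    (hf : ContinuousOn f (Icc ε L)) :
    IntervalIntegrable (fun x => (f x / x) ^ 2) volume ε L :=
  ((hf.div continuousOn_id fun _ hx => (hε.trans_le hx.1).ne').pow 2).intervalIntegrable_of_Icc hεL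

theorem sq_div_sub_sq_div_le_integral {α β : ℝ} (hα : 0 < α) (hαβ : α ≤ β)
    (hf : ContinuousOn f (Icc α β)) (hf' : ∀ x ∈ Ioo α β, HasDerivAt f (f' x) x)
    (hint : IntervalIntegrable (fun x => f' x ^ 2) volume α β) :
    f β ^ 2 / (2 * β) - f α ^ 2 / (2 * α)
      ≤ ∫ x in α..β, (f' x ^ 2 - 1 / 4 * (f x / x) ^ 2) := by
  have hpos : ∀ x ∈ Icc α β, 2 * x ≠ 0 := fun x hx => (mul_pos two_pos (hα.trans_le hx.1)).ne'
  refine intervalIntegral.sub_le_integral_of_hasDeriv_right_of_le hαβ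
    (g := fun x => f x ^ 2 / (2 * x)) ((hf.pow 2).div (by fun_prop) hpos)
    (fun x hx => (((hf' x hx).pow 2).div ((hasDerivAt_id x).const_mul 2)
      (hpos x (Ioo_subset_Icc_self hx))).hasDerivWithinAt)
    ((intervalIntegrable_iff_integrableOn_Icc_of_le hαβ).1
      (hint.sub ((intervalIntegrable_sq_div_self_of_pos hα hαβ hf).const_mul _))) fun x hx => ?_
  have hx0 : x ≠ 0 := (hα.trans hx.1).ne'
  -- `(f²/2x)' = f'² - f²/4x² - (f' - f/2x)²`
  refine sub_nonneg.1 ((sq_nonneg (f' x - f x / (2 * x))).trans_eq ?_)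
  simp only [id, Pi.pow_apply]
  field_simp
  ring

theorem integral_sq_div_self_le_of_pos {ε : ℝ} (hε : 0 < ε) (hεL : ε ≤ L)
    (hf : ContinuousOn f (Icc 0 L)) (hf0 : f 0 = 0)
    (hf' : ∀ x ∈ Ioo 0 L, HasDerivAt f (f' x) x)
    (hint : IntervalIntegrable (fun x => f' x ^ 2) volume 0 L) :
    ∫ x in ε..L, (f x / x) ^ 2 ≤ 4 * ∫ x in (0 : ℝ)..L, f' x ^ 2 := by
  have hεmem : ε ∈ uIcc 0 L := Icc_subset_uIcc ⟨hε.le, hεL⟩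
  have hint₀ := hint.mono_set (uIcc_subset_uIcc left_mem_uIcc hεmem)
  have hint₁ := hint.mono_set (uIcc_subset_uIcc hεmem right_mem_uIcc)
  have hf₁ : ContinuousOn f (Icc ε L) := hf.mono (Icc_subset_Icc_left hε.le)
  have hparts := sq_div_sub_sq_div_le_integral hε hεL hf₁
    (fun x hx => hf' x ⟨hε.trans hx.1, hx.2⟩) hint₁
  rw [intervalIntegral.integral_sub hint₁
    ((intervalIntegrable_sq_div_self_of_pos hε hεL hf₁).const_mul _),
    intervalIntegral.integral_const_mul] at hparts
  have hboundary : f ε ^ 2 / (2 * ε) ≤ (∫ x in (0 : ℝ)..ε, f' x ^ 2) / 2 := by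
    have h := sq_sub_le_mul_integral_sq_deriv hε.le (hf.mono (Icc_subset_Icc_right hεL))
      (fun x hx => hf' x ⟨hx.1, hx.2.trans_le hεL⟩) hint₀
    rw [hf0, sub_zero, sub_zero] at h
    rw [div_le_iff₀ (by positivity)]
    linarith
  have hright : 0 ≤ f L ^ 2 / (2 * L) := div_nonneg (sq_nonneg _) (by linarith)
  have hleft : 0 ≤ ∫ x in (0 : ℝ)..ε, f' x ^ 2 :=
    intervalIntegral.integral_nonneg hε.le fun x _ => sq_nonneg _
  linarith [intervalIntegral.integral_add_adjacent_intervals hint₀ hint₁]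

theorem intervalIntegrable_sq_div_self (hL : 0 < L) (hf : ContinuousOn f (Icc 0 L))
    (hf0 : f 0 = 0) (hf' : ∀ x ∈ Ioo 0 L, HasDerivAt f (f' x) x)
    (hint : IntervalIntegrable (fun x => f' x ^ 2) volume 0 L) :
    IntervalIntegrable (fun x => (f x / x) ^ 2) volume 0 L := by
  obtain ⟨ε, -, hε, hlim⟩ := exists_seq_strictAnti_tendsto' hL
  have hdiv : ∀ n, IntegrableOn (fun x => (f x / x) ^ 2) (Ioc (ε n) L) := fun n =>
    (intervalIntegrable_iff_integrableOn_Ioc_of_le (hε n).2.le).1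
      (intervalIntegrable_sq_div_self_of_pos (hε n).1 (hε n).2.le
        (hf.mono (Icc_subset_Icc_left (hε n).1.le)))
  refine (intervalIntegrable_iff_integrableOn_Ioc_of_le hL.le).2
    (integrableOn_Ioc_of_intervalIntegral_norm_bounded_left hdiv hlim
      (I := 4 * ∫ x in (0 : ℝ)..L, f' x ^ 2) (Eventually.of_forall fun n => ?_))
  simp only [norm_pow, norm_div, norm_eq_abs, div_pow, sq_abs]
  simpa only [intervalIntegral.integral_of_le (hε n).2.le, div_pow] using
    integral_sq_div_self_le_of_pos (hε n).1 (hε n).2.le hf hf0 hf' hint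

theorem integral_sq_div_self_le (hL : 0 < L) (hf : ContinuousOn f (Icc 0 L))
    (hf0 : f 0 = 0) (hf' : ∀ x ∈ Ioo 0 L, HasDerivAt f (f' x) x)
    (hint : IntervalIntegrable (fun x => f' x ^ 2) volume 0 L) :
    ∫ x in (0 : ℝ)..L, (f x / x) ^ 2 ≤ 4 * ∫ x in (0 : ℝ)..L, f' x ^ 2 := by
  have hdivint := intervalIntegrable_sq_div_self hL hf hf0 hf' hint
  have hlim := (intervalIntegral.continuousOn_primitive_interval_left
    ((intervalIntegrable_iff_integrableOn_Icc_of_le hL.le).1 hdivint |>.mono_set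
      (uIcc_of_le hL.le).subset) 0 left_mem_uIcc).tendsto.mono_left
    (nhdsWithin_mono 0 (Ioo_subset_Icc_self.trans Icc_subset_uIcc))
  rw [nhdsWithin_Ioo_eq_nhdsGT hL] at hlim
  refine le_of_tendsto hlim ?_
  filter_upwards [Ioc_mem_nhdsGT hL] with ε hε using
    integral_sq_div_self_le_of_pos hε.1 hε.2 hf hf0 hf' hint

theorem integral_sq_deriv_add_mul_sq_div_self_nonneg {c : ℝ} (hc : -1 / 4 ≤ c) (hL : 0 < L)
    (hf : ContinuousOn f (Icc 0 L)) (hf0 : f 0 = 0)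
    (hf' : ∀ x ∈ Ioo 0 L, HasDerivAt f (f' x) x)
    (hint : IntervalIntegrable (fun x => f' x ^ 2) volume 0 L) :
    0 ≤ ∫ x in (0 : ℝ)..L, (f' x ^ 2 + c * (f x / x) ^ 2) := by
  have hardy := integral_sq_div_self_le hL hf hf0 hf' hint
  have hnonneg : 0 ≤ ∫ x in (0 : ℝ)..L, (f x / x) ^ 2 :=
    intervalIntegral.integral_nonneg hL.le fun x _ => sq_nonneg _
  rw [intervalIntegral.integral_add hint
    ((intervalIntegrable_sq_div_self hL hf hf0 hf' hint).const_mul c),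
    intervalIntegral.integral_const_mul]
  nlinarith

end Hardy
section AgmonIdentity

/-- `u` is a `C²` solution on `(α, β)` of the Schrödinger equation `-u'' + P u = lam u` with
Dirichlet conditions at both endpoints; the zero solution is allowed. -/
structure IsDirichletSolution (P : ℝ → ℝ) (lam α β : ℝ) (u : ℝ → ℝ) : Prop where
  continuousOn : ContinuousOn u (Icc α β)
  contDiffOn : ContDiffOn ℝ 2 u (Ioo α β)
  left_eq_zero : u α = 0
  right_eq_zero : u β = 0
  eigen_eq : ∀ x ∈ Ioo α β, -deriv (deriv u) x + P x * u x = lam * u x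

/-- The flux `u u' e^{2ξψ}`, whose derivative is the integrand of the Agmon identity. -/
noncomputable def agmonFlux (ξ : ℝ) (u ψ : ℝ → ℝ) : ℝ → ℝ :=
  fun x => u x * deriv u x * Real.exp (ξ * ψ x) ^ 2

variable {P u ψ ψ' : ℝ → ℝ} {ξ lam α β : ℝ}

theorem IsDirichletSolution.hasDerivAt (hu : IsDirichletSolution P lam α β u) {x : ℝ}
    (hx : x ∈ Ioo α β) : HasDerivAt u (deriv u x) x :=
  ((hu.contDiffOn.contDiffAt (isOpen_Ioo.mem_nhds hx)).differentiableAt two_ne_zero).hasDerivAt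

theorem IsDirichletSolution.hasDerivAt_deriv (hu : IsDirichletSolution P lam α β u) {x : ℝ}
    (hx : x ∈ Ioo α β) : HasDerivAt (deriv u) ((P x - lam) * u x) x := by
  have hdiff : DifferentiableAt ℝ (deriv u) x :=
    ((hu.contDiffOn.deriv_of_isOpen isOpen_Ioo one_add_one_eq_two.le).contDiffAt
      (isOpen_Ioo.mem_nhds hx)).differentiableAt one_ne_zero
  exact hdiff.hasDerivAt.congr_deriv (by linear_combination -hu.eigen_eq x hx)

theorem hasDerivAt_agmonTheta {u₁ ψ₁ x : ℝ} (hu : HasDerivAt u u₁ x) (hψ : HasDerivAt ψ ψ₁ x) :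
    HasDerivAt (agmonTheta ξ u ψ) ((u₁ + ξ * ψ₁ * u x) * Real.exp (ξ * ψ x)) x :=
  (hu.mul (hψ.const_mul ξ).exp).congr_deriv (by ring)

theorem hasDerivAt_agmonFlux {ψ₁ Q x : ℝ} (hu : HasDerivAt u (deriv u x) x)
    (hu' : HasDerivAt (deriv u) (Q * u x) x) (hψ : HasDerivAt ψ ψ₁ x) :
    HasDerivAt (agmonFlux ξ u ψ) (deriv (agmonTheta ξ u ψ) x ^ 2
      + (Q - ξ ^ 2 * ψ₁ ^ 2) * agmonTheta ξ u ψ x ^ 2) x := by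
  refine ((hu.mul hu').mul ((hψ.const_mul ξ).exp.pow 2)).congr_deriv ?_
  rw [(hasDerivAt_agmonTheta hu hψ).deriv, agmonTheta]
  simp only [Pi.mul_apply, Pi.pow_apply]
  ring

theorem IsDirichletSolution.integral_agmon_nonpos (hu : IsDirichletSolution P lam α β u)
    (hαβ : α < β) (hψ : ∀ x ∈ Ioo α β, HasDerivAt ψ (ψ' x) x)
    (hint : IntervalIntegrable (fun x => deriv (agmonTheta ξ u ψ) x ^ 2
      + (P x - lam - ξ ^ 2 * ψ' x ^ 2) * agmonTheta ξ u ψ x ^ 2) volume α β) :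
    ∫ x in α..β, (deriv (agmonTheta ξ u ψ) x ^ 2
      + (P x - lam - ξ ^ 2 * ψ' x ^ 2) * agmonTheta ξ u ψ x ^ 2) ≤ 0 := by
  have hsq : ∀ x ∈ Ioo α β, HasDerivAt (fun y => u y ^ 2) (2 * (u x * deriv u x)) x :=
    fun x hx => ((hu.hasDerivAt hx).pow 2).congr_deriv (by ring)
  have hleft : ∃ᶠ x in 𝓝[>] α, 0 ≤ 2 * (u x * deriv u x) :=
    frequently_nonneg_deriv_nhdsGT hαβ (hu.continuousOn.pow 2) hsq
      fun x _ => by simpa [hu.left_eq_zero] using sq_nonneg (u x)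
  have hright : ∃ᶠ x in 𝓝[<] β, 2 * (u x * deriv u x) ≤ 0 :=
    frequently_nonpos_deriv_nhdsLT hαβ (hu.continuousOn.pow 2) hsq
      fun x _ => by simpa [hu.right_eq_zero] using sq_nonneg (u x)
  refine integral_nonpos_of_hasDerivAt_of_frequently hαβ (fun x hx =>
    hasDerivAt_agmonFlux (hu.hasDerivAt hx) (hu.hasDerivAt_deriv hx) (hψ x hx)) hint
    (hleft.mono fun x hx => ?_) (hright.mono fun x hx => ?_)
  · exact mul_nonneg (by linarith) (sq_nonneg _)
  · exact mul_nonpos_of_nonpos_of_nonneg (by linarith) (sq_nonneg _)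

end AgmonIdentity

section AgmonWeight

/-- The classically allowed region `{V ≤ E}` of `[0, L]` at energy `E`. -/
def allowedRegion (V : ℝ → ℝ) (E L : ℝ) : Set ℝ :=
  {x ∈ Icc 0 L | V x ≤ E}

/-- `ψ` is an Agmon weight for the potential `V` at energy `E`: it vanishes on the allowed region
and `ψ'² ≤ κ (V - E)₊`. The rate `κ` is `(1 - δ)²` in the usual normalization. Only `C¹`
regularity is asked for, so that the Agmon distance `√κ ∫ √((V - E)₊)` itself qualifies when
the allowed region is an initial segment. -/
structure IsAgmonWeight (V : ℝ → ℝ) (E κ L : ℝ) (ψ : ℝ → ℝ) : Prop where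
  contDiffOn : ContDiffOn ℝ 1 ψ (Icc 0 L)
  eq_zero : ∀ x ∈ allowedRegion V E L, ψ x = 0
  sq_derivWithin_le : ∀ x ∈ Icc 0 L, derivWithin ψ (Icc 0 L) x ^ 2 ≤ κ * max (V x - E) 0

/-- The density `(V - E - ψ'²) θ²` of the Agmon energy on `[0, L]`, with `θ = u e^{ξψ}`. The
derivative `ψ'` is taken within `[0, L]`, so that it is meaningful at the endpoints. -/
noncomputable def agmonDensity (V : ℝ → ℝ) (E L ξ : ℝ) (u ψ : ℝ → ℝ) : ℝ → ℝ :=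
  fun x => (V x - E - derivWithin ψ (Icc 0 L) x ^ 2) * agmonTheta ξ u ψ x ^ 2

variable {V u ψ : ℝ → ℝ} {ξ c lam E κ L : ℝ}

theorem allowedRegion_eq_Icc {x₀ : ℝ} (hx₀ : x₀ ≤ L) (hle : ∀ x ∈ Icc 0 x₀, V x ≤ E)
    (hgt : ∀ x ∈ Ioc x₀ L, E < V x) : allowedRegion V E L = Icc 0 x₀ := by
  ext x
  refine ⟨fun hx => ⟨hx.1.1, ?_⟩, fun hx => ⟨⟨hx.1, hx.2.trans hx₀⟩, hle x hx⟩⟩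
  exact le_of_not_gt fun h => (hgt x ⟨h, hx.1.2⟩).not_ge hx.2

theorem IsAgmonWeight.derivWithin_eq_zero (hψ : IsAgmonWeight V E κ L ψ) {x : ℝ}
    (hx : x ∈ allowedRegion V E L) : derivWithin ψ (Icc 0 L) x = 0 := by
  have h := hψ.sq_derivWithin_le x hx.1
  rw [max_eq_right (sub_nonpos.2 hx.2), mul_zero] at h
  exact pow_eq_zero_iff two_ne_zero |>.1 (h.antisymm (sq_nonneg _))

theorem IsAgmonWeight.agmonTheta_eq (hψ : IsAgmonWeight V E κ L ψ) {x : ℝ}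
    (hx : x ∈ allowedRegion V E L) : agmonTheta ξ u ψ x = u x := by
  rw [agmonTheta, hψ.eq_zero x hx, mul_zero, Real.exp_zero, mul_one]

theorem IsAgmonWeight.neg_mul_sq_le_agmonDensity (hψ : IsAgmonWeight V E κ L ψ) {S x : ℝ}
    (hx : x ∈ allowedRegion V E L) (hS : |V x - E| ≤ S) :
    -(S * u x ^ 2) ≤ agmonDensity V E L ξ u ψ x := by
  rw [agmonDensity, hψ.derivWithin_eq_zero hx, hψ.agmonTheta_eq hx]
  nlinarith [neg_le_of_abs_le hS, sq_nonneg (u x)]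

theorem IsAgmonWeight.mul_sq_agmonTheta_le_agmonDensity (hψ : IsAgmonWeight V E κ L ψ) {x : ℝ}
    (hx : x ∈ Icc 0 L) (hEV : E < V x) :
    (1 - κ) * (V x - E) * agmonTheta ξ u ψ x ^ 2 ≤ agmonDensity V E L ξ u ψ x := by
  have h := hψ.sq_derivWithin_le x hx
  rw [max_eq_left (sub_nonneg.2 hEV.le)] at h
  exact mul_le_mul_of_nonneg_right (by linarith) (sq_nonneg _)

theorem sq_agmonTheta (x : ℝ) :
    agmonTheta ξ u ψ x ^ 2 = Real.exp (2 * ξ * ψ x) * u x ^ 2 := by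
  rw [agmonTheta, mul_pow, ← Real.exp_nat_mul, mul_comm, Nat.cast_two, mul_assoc]

theorem continuousOn_agmonTheta {s : Set ℝ} (hu : ContinuousOn u s) (hψ : ContinuousOn ψ s) :
    ContinuousOn (agmonTheta ξ u ψ) s :=
  hu.mul (hψ.const_mul ξ).rexp

theorem hasDerivAt_of_contDiffOn_Icc {α β x : ℝ} (hψ : ContDiffOn ℝ 1 ψ (Icc α β))
    (hx : x ∈ Ioo α β) : HasDerivAt ψ (derivWithin ψ (Icc α β) x) x :=
  (hψ.differentiableOn one_ne_zero x (Ioo_subset_Icc_self hx)).hasDerivWithinAt.hasDerivAt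
    (Icc_mem_nhds hx.1 hx.2)

theorem continuousOn_agmonDensity (hL : 0 < L) (hV : ContinuousOn V (Icc 0 L))
    (hu : ContinuousOn u (Icc 0 L)) (hψ : ContDiffOn ℝ 1 ψ (Icc 0 L)) :
    ContinuousOn (agmonDensity V E L ξ u ψ) (Icc 0 L) := by
  have hψ' := hψ.continuousOn_derivWithin (uniqueDiffOn_Icc hL) le_rfl
  have hθ := continuousOn_agmonTheta (ξ := ξ) hu hψ.continuousOn
  unfold agmonDensity
  fun_prop

theorem IsDirichletSolution.integral_agmonDensity_nonpos
    (hu : IsDirichletSolution (fun x => ξ ^ 2 * V x + c / x ^ 2) lam 0 L u)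
    (hL : 0 < L) (hξ : 0 < ξ) (hc : -1 / 4 ≤ c) (hlam : lam ≤ E * ξ ^ 2)
    (hV : ContinuousOn V (Icc 0 L)) (hψ : ContDiffOn ℝ 1 ψ (Icc 0 L))
    (hθ' : IntegrableOn (fun x => deriv (agmonTheta ξ u ψ) x ^ 2) (Ioo 0 L)) :
    ∫ x in (0 : ℝ)..L, agmonDensity V E L ξ u ψ x ≤ 0 := by
  set θ := agmonTheta ξ u ψ with hθ
  set ρ := agmonDensity V E L ξ u ψ with hρ
  have hψ' := fun x hx => hasDerivAt_of_contDiffOn_Icc (x := x) hψ hx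
  have hθcont : ContinuousOn θ (Icc 0 L) :=
    continuousOn_agmonTheta hu.continuousOn hψ.continuousOn
  have hθderiv : ∀ x ∈ Ioo 0 L, HasDerivAt θ (deriv θ x) x := fun x hx =>
    (hasDerivAt_agmonTheta (hu.hasDerivAt hx) (hψ' x hx)).differentiableAt.hasDerivAt
  have hθ0 : θ 0 = 0 := by rw [hθ, agmonTheta, hu.left_eq_zero, zero_mul]
  have hθ'int : IntervalIntegrable (fun x => deriv θ x ^ 2) volume 0 L :=
    (intervalIntegrable_iff_integrableOn_Ioo_of_le hL.le).2 hθ'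
  have hardy_nonneg :=
    integral_sq_deriv_add_mul_sq_div_self_nonneg hc hL hθcont hθ0 hθderiv hθ'int
  have hsq_nonneg : 0 ≤ ∫ x in (0 : ℝ)..L, θ x ^ 2 :=
    intervalIntegral.integral_nonneg hL.le fun x _ => sq_nonneg _
  have hardy_int := hθ'int.add
    ((intervalIntegrable_sq_div_self hL hθcont hθ0 hθderiv hθ'int).const_mul c)
  have hρint : IntervalIntegrable (fun x => ξ ^ 2 * ρ x) volume 0 L :=
    ((continuousOn_agmonDensity hL hV hu.continuousOn hψ).intervalIntegrable_of_Icc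
      hL.le).const_mul _
  have hsq_int : IntervalIntegrable (fun x => (E * ξ ^ 2 - lam) * θ x ^ 2) volume 0 L :=
    ((hθcont.pow 2).intervalIntegrable_of_Icc hL.le).const_mul _
  have hexpand : (fun x => deriv θ x ^ 2 + (ξ ^ 2 * V x + c / x ^ 2 - lam
      - ξ ^ 2 * derivWithin ψ (Icc 0 L) x ^ 2) * θ x ^ 2)
      = fun x => deriv θ x ^ 2 + c * (θ x / x) ^ 2 + ξ ^ 2 * ρ x
        + (E * ξ ^ 2 - lam) * θ x ^ 2 := by
    funext x
    simp only [hρ, agmonDensity, div_pow]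
    ring
  have henergy := hu.integral_agmon_nonpos hL hψ' (hexpand ▸ (hardy_int.add hρint).add hsq_int)
  rw [hexpand, intervalIntegral.integral_add (hardy_int.add hρint) hsq_int,
    intervalIntegral.integral_add hardy_int hρint, intervalIntegral.integral_const_mul,
    intervalIntegral.integral_const_mul] at henergy
  refine nonpos_of_mul_nonpos_right ?_ (pow_pos hξ 2)
  nlinarith [mul_nonneg (sub_nonneg.2 hlam) hsq_nonneg]

theorem abs_sub_le_sSup_allowedRegion (hV : ContinuousOn V (Icc 0 L)) {x : ℝ}
    (hx : x ∈ allowedRegion V E L) :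
    |V x - E| ≤ sSup ((fun y => |V y - E|) '' allowedRegion V E L) :=
  le_csSup ((isCompact_Icc.bddAbove_image (hV.sub continuousOn_const).abs).mono
    (image_mono (sep_subset _ _))) (mem_image_of_mem _ hx)

theorem sInf_sub_pos {a b : ℝ} (hab : a ≤ b) (hV : ContinuousOn V (Icc a b))
    (hEV : ∀ x ∈ Icc a b, E < V x) : 0 < sInf ((fun x => V x - E) '' Icc a b) := by
  obtain ⟨x, hx, hmin⟩ := (isCompact_Icc.image_of_continuousOn
    (hV.sub continuousOn_const)).sInf_mem ((nonempty_Icc.2 hab).image _)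
  exact hmin ▸ sub_pos.2 (hEV x hx)

theorem IsAgmonWeight.agmonDensity_add_nonneg (hψ : IsAgmonWeight V E κ L ψ) (hκ : κ < 1)
    {S x : ℝ} (hS : 0 ≤ S) (hSbound : ∀ y ∈ allowedRegion V E L, |V y - E| ≤ S) (hx : x ∈ Icc 0 L) :
    0 ≤ agmonDensity V E L ξ u ψ x + S * u x ^ 2 := by
  rcases le_or_gt (V x) E with hle | hlt
  · linarith [hψ.neg_mul_sq_le_agmonDensity (ξ := ξ) (u := u) ⟨hx, hle⟩ (hSbound x ⟨hx, hle⟩)]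
  · exact add_nonneg ((mul_nonneg (mul_nonneg (sub_pos.2 hκ).le (sub_pos.2 hlt).le)
      (sq_nonneg _)).trans (hψ.mul_sq_agmonTheta_le_agmonDensity hx hlt))
      (mul_nonneg hS (sq_nonneg _))

theorem IsAgmonWeight.mul_sq_le_agmonDensity (hψ : IsAgmonWeight V E κ L ψ) (hκ : κ ≤ 1)
    (hξ : 0 ≤ ξ) {m t x : ℝ} (hm : 0 < m) (hx : x ∈ Icc 0 L) (hmV : m ≤ V x - E) (ht : t ≤ ψ x) :
    (1 - κ) * m * Real.exp (2 * ξ * t) * u x ^ 2 ≤ agmonDensity V E L ξ u ψ x := by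
  have hcoeff : 0 ≤ (1 - κ) * (V x - E) := mul_nonneg (sub_nonneg.2 hκ) (hm.le.trans hmV)
  calc (1 - κ) * m * Real.exp (2 * ξ * t) * u x ^ 2
      ≤ (1 - κ) * (V x - E) * Real.exp (2 * ξ * ψ x) * u x ^ 2 := by gcongr
    _ = (1 - κ) * (V x - E) * agmonTheta ξ u ψ x ^ 2 := by rw [sq_agmonTheta, mul_assoc _ (exp _)]
    _ ≤ agmonDensity V E L ξ u ψ x := hψ.mul_sq_agmonTheta_le_agmonDensity hx (by linarith)

theorem IsDirichletSolution.mul_integral_sq_le {a b S m : ℝ}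
    (hu : IsDirichletSolution (fun x => ξ ^ 2 * V x + c / x ^ 2) lam 0 L u)
    (hψ : IsAgmonWeight V E κ L ψ) (hψ_mono : MonotoneOn ψ (Icc a b))
    (hθ' : IntegrableOn (fun x => deriv (agmonTheta ξ u ψ) x ^ 2) (Ioo 0 L))
    (hξ : 0 < ξ) (hc : -1 / 4 ≤ c) (hκ : κ < 1) (hlam : lam ≤ E * ξ ^ 2)
    (hV : ContinuousOn V (Icc 0 L)) (ha : 0 ≤ a) (hab : a < b) (hbL : b ≤ L)
    (hS : 0 ≤ S) (hSbound : ∀ x ∈ allowedRegion V E L, |V x - E| ≤ S)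
    (hm : 0 < m) (hmbound : ∀ x ∈ Icc a b, m ≤ V x - E) :
    (1 - κ) * m * Real.exp (2 * ξ * ψ a) * ∫ x in a..b, u x ^ 2
      ≤ S * ∫ x in (0 : ℝ)..L, u x ^ 2 := by
  have hL : 0 < L := ha.trans_lt (hab.trans_le hbL)
  have hsub : Icc a b ⊆ Icc 0 L := Icc_subset_Icc ha hbL
  set ρ := agmonDensity V E L ξ u ψ
  have hsq : ContinuousOn (fun x => u x ^ 2) (Icc 0 L) := hu.continuousOn.pow 2
  have hρ : ContinuousOn ρ (Icc 0 L) :=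
    continuousOn_agmonDensity hL hV hu.continuousOn hψ.contDiffOn
  have hρS : ContinuousOn (fun x => ρ x + S * u x ^ 2) (Icc 0 L) := hρ.add (hsq.const_mul S)
  calc (1 - κ) * m * Real.exp (2 * ξ * ψ a) * ∫ x in a..b, u x ^ 2
      = ∫ x in a..b, (1 - κ) * m * Real.exp (2 * ξ * ψ a) * u x ^ 2 :=
        (intervalIntegral.integral_const_mul _ _).symm
    _ ≤ ∫ x in a..b, (ρ x + S * u x ^ 2) := by
        refine intervalIntegral.integral_mono_on hab.le
          (((hsq.mono hsub).const_mul _).intervalIntegrable_of_Icc hab.le)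
          ((hρS.mono hsub).intervalIntegrable_of_Icc hab.le) fun x hx => ?_
        exact (hψ.mul_sq_le_agmonDensity hκ.le hξ.le hm (hsub hx) (hmbound x hx)
          (hψ_mono (left_mem_Icc.2 hab.le) hx hx.1)).trans
          (le_add_of_nonneg_right (mul_nonneg hS (sq_nonneg _)))
    _ ≤ ∫ x in (0 : ℝ)..L, (ρ x + S * u x ^ 2) := by
        refine intervalIntegral.integral_mono_interval ha hab.le hbL
          ((ae_restrict_iff' measurableSet_Ioc).2 (ae_of_all _ fun x hx => ?_))
          (hρS.intervalIntegrable_of_Icc hL.le)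
        exact hψ.agmonDensity_add_nonneg hκ hS hSbound (Ioc_subset_Icc_self hx)
    _ = (∫ x in (0 : ℝ)..L, ρ x) + S * ∫ x in (0 : ℝ)..L, u x ^ 2 := by
        rw [intervalIntegral.integral_add (hρ.intervalIntegrable_of_Icc hL.le)
          ((hsq.const_mul S).intervalIntegrable_of_Icc hL.le),
          intervalIntegral.integral_const_mul]
    _ ≤ S * ∫ x in (0 : ℝ)..L, u x ^ 2 := add_le_of_nonpos_left
        (hu.integral_agmonDensity_nonpos hL hξ hc hlam hV hψ.contDiffOn hθ')

theorem agmon_estimate_general {a b : ℝ} (hξ : 0 < ξ) (hc : -1 / 4 ≤ c) (hκ : κ < 1)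
    (hV : ContinuousOn V (Icc 0 L)) (ha : 0 ≤ a) (hab : a < b) (hbL : b ≤ L)
    (hEV : ∀ x ∈ Icc a b, E < V x)
    (hu : IsDirichletSolution (fun x => ξ ^ 2 * V x + c / x ^ 2) lam 0 L u)
    (hlam : lam ≤ E * ξ ^ 2) (hψ : IsAgmonWeight V E κ L ψ) (hψ_mono : MonotoneOn ψ (Icc a b))
    (hθ' : IntegrableOn (fun x => deriv (agmonTheta ξ u ψ) x ^ 2) (Ioo 0 L)) :
    ∫ x in a..b, u x ^ 2
      ≤ sSup ((fun x => |V x - E|) '' allowedRegion V E L) /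
          ((1 - κ) * sInf ((fun x => V x - E) '' Icc a b)) *
        Real.exp (-2 * ξ * ψ a) * ∫ x in (0 : ℝ)..L, u x ^ 2 := by
  have hVab : ContinuousOn V (Icc a b) := hV.mono (Icc_subset_Icc ha hbL)
  have hm : 0 < sInf ((fun x => V x - E) '' Icc a b) := sInf_sub_pos hab.le hVab hEV
  have hmain := hu.mul_integral_sq_le hψ hψ_mono hθ' hξ hc hκ hlam hV ha hab hbL
    (Real.sSup_nonneg (forall_mem_image.2 fun x _ => abs_nonneg _))
    (fun x hx => abs_sub_le_sSup_allowedRegion hV hx) hm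
    fun x hx => csInf_le (isCompact_Icc.bddBelow_image (hVab.sub continuousOn_const))
      (mem_image_of_mem _ hx)
  have hexp : Real.exp (-2 * ξ * ψ a) = (Real.exp (2 * ξ * ψ a))⁻¹ := by
    rw [← Real.exp_neg, neg_mul, neg_mul]
  rw [hexp, ← div_eq_mul_inv, div_div, div_mul_eq_mul_div,
    le_div_iff₀ (mul_pos (mul_pos (sub_pos.2 hκ) hm) (exp_pos _))]
  linarith

end AgmonWeight

end

/-- One-dimensional quantitative Agmon estimate: an `L²`-normalized eigenfunction of
`−∂_x² + ξ²q² + (ν²−1/4)/x²` with eigenvalue `λ ≤ δξ²` satisfies, on an interval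
`[a,b]` outside the classically allowed region `{q² ≤ δ} = [0,x_δ]`,
`∫_a^b u² ≤ (sup_{[0,x_δ]}|q²−δ| / ((2δ−δ²) min_{[a,b]}(q²−δ))) e^{−2ξψ(a)}`,
where `ψ` is a nondecreasing `C²` Agmon weight vanishing on `[0,x_δ]` with
`ψ'² ≤ (1−δ)²(q²−δ)₊`. -/
theorem agmon_estimate (ν L ξ lam δ xδ a b : ℝ) (q u ψ : ℝ → ℝ)
    (hν : 0 < ν) (hL : 0 < L) (hξ : 0 < ξ) (hδ : δ ∈ Set.Ioo (0 : ℝ) 1)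
    (hxδ : xδ ∈ Set.Ioo (0 : ℝ) L)
    (hq : ContinuousOn q (Set.Icc 0 L))
    (hq_le : ∀ x ∈ Set.Icc (0 : ℝ) xδ, (q x) ^ 2 ≤ δ)
    (hq_gt : ∀ x ∈ Set.Ioc xδ L, δ < (q x) ^ 2)
    (hxa : xδ < a) (hab : a < b) (hbL : b ≤ L)
    (hu_cont : ContinuousOn u (Set.Icc 0 L))
    (hu_C2 : ContDiffOn ℝ 2 u (Set.Ioo 0 L))
    (hu0 : u 0 = 0) (huL : u L = 0)
    (heq : ∀ x ∈ Set.Ioo (0 : ℝ) L,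
      -deriv (deriv u) x + ξ ^ 2 * (q x) ^ 2 * u x + ((ν ^ 2 - 1 / 4) / x ^ 2) * u x
        = lam * u x)
    (hnorm : (∫ x in (0 : ℝ)..L, (u x) ^ 2) = 1)
    (hlam : lam ≤ δ * ξ ^ 2)
    (hψ : ContDiffOn ℝ 2 ψ (Set.Icc 0 L))
    (hψ_mono : MonotoneOn ψ (Set.Icc 0 L))
    (hψ0 : ∀ x ∈ Set.Icc (0 : ℝ) xδ, ψ x = 0)
    (hψ' : ∀ x ∈ Set.Icc (0 : ℝ) L,
      (derivWithin ψ (Set.Icc 0 L) x) ^ 2 ≤ (1 - δ) ^ 2 * max ((q x) ^ 2 - δ) 0)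
    (hθ'int : MeasureTheory.IntegrableOn
      (fun x => (deriv (agmonTheta ξ u ψ) x) ^ 2) (Set.Ioo 0 L))
    (hθxint : MeasureTheory.IntegrableOn
      (fun x => (agmonTheta ξ u ψ x / x) ^ 2) (Set.Ioo 0 L))
    (hlim0 : Filter.Tendsto (fun x => agmonTheta ξ u ψ x * deriv (agmonTheta ξ u ψ) x)
      (nhdsWithin 0 (Set.Ioi 0)) (nhds 0))
    (hlimL : Filter.Tendsto (fun x => agmonTheta ξ u ψ x * deriv (agmonTheta ξ u ψ) x)
      (nhdsWithin L (Set.Iio L)) (nhds 0))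
    (hhardy : (1 / 4) * (∫ x in Set.Ioo (0 : ℝ) L, (agmonTheta ξ u ψ x / x) ^ 2)
      ≤ ∫ x in Set.Ioo (0 : ℝ) L, (deriv (agmonTheta ξ u ψ) x) ^ 2) :
    ∫ x in a..b, (u x) ^ 2
      ≤ (sSup ((fun x => |(q x) ^ 2 - δ|) '' Set.Icc 0 xδ) /
          ((2 * δ - δ ^ 2) * sInf ((fun x => (q x) ^ 2 - δ) '' Set.Icc a b))) *
        Real.exp (-2 * ξ * ψ a) := by
  have hν' : -1 / 4 ≤ ν ^ 2 - 1 / 4 := by linarith [sq_nonneg ν]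
  have hκ : (1 - δ) ^ 2 < 1 := by nlinarith [hδ.1, hδ.2]
  have hF : allowedRegion (fun x => q x ^ 2) δ L = Icc 0 xδ :=
    allowedRegion_eq_Icc hxδ.2.le hq_le hq_gt
  have hu : IsDirichletSolution (fun x => ξ ^ 2 * q x ^ 2 + (ν ^ 2 - 1 / 4) / x ^ 2) lam 0 L u :=
    ⟨hu_cont, hu_C2, hu0, huL, fun x hx => by linear_combination heq x hx⟩
  have hweight : IsAgmonWeight (fun x => q x ^ 2) δ ((1 - δ) ^ 2) L ψ :=
    ⟨hψ.of_le one_le_two, hF ▸ hψ0, hψ'⟩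
  have ha : 0 ≤ a := hxδ.1.le.trans hxa.le
  have h := agmon_estimate_general (V := fun x => q x ^ 2) hξ hν' hκ (hq.pow 2) ha hab hbL
    (fun x hx => hq_gt x ⟨hxa.trans_le hx.1, hx.2.trans hbL⟩) hu hlam hweight
    (hψ_mono.mono (Icc_subset_Icc ha hbL)) hθ'int
  rwa [hnorm, mul_one, hF, show 1 - (1 - δ) ^ 2 = 2 * δ - δ ^ 2 by ring] at h
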